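/- arXiv:2401.07146 — 2 statements merged into one kernel-verified Lean document; each statement's English description precedes it below -/
import Mathlib

section
/- For V ∈ Z_p^d and α > 0, the function f(x) = e^{2πi{ξ·x}_p} on Z_p^d is an eigenfunction of the directional Vladimirov–Taibleson operator ∂_V^α f(x) = ((1-p^α)/(1-p^{-(α+1)})) ∫_{Z_p} (f(x - tV) - f(x))/|t|_p^{α+1} dt, with eigenvalue |V·ξ|_p^α - (1-p^{-1})/(1-p^{-(α+1)}) when |V·ξ|_p > 1, and eigenvalue 0 when |V·ξ|_p ≤ 1. -/
open MeasureTheory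

noncomputable section

variable (p : ℕ) [Fact p.Prime]

/-- Truncation of a `p`-adic number to a `p`-adic integer (`0` if it is not an integer). -/
def padicToInt (x : ℚ_[p]) : ℤ_[p] := if h : ‖x‖ ≤ 1 then ⟨x, h⟩ else 0

/-- The `p`-adic fractional part `{x}_p`, as a rational number. -/
def padicFract (x : ℚ_[p]) : ℚ :=
  ((padicToInt p (x * (p : ℚ_[p]) ^ (-x.valuation).toNat)).appr (-x.valuation).toNat : ℚ) /
    (p : ℚ) ^ (-x.valuation).toNat

/-- The additive character `x ↦ e^{2πi {x}_p}` of `ℚ_p`. -/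
def eChar (x : ℚ_[p]) : ℂ := Complex.exp (2 * Real.pi * Complex.I * (padicFract p x : ℂ))

instance : MeasurableSpace ℤ_[p] := borel _
instance : BorelSpace ℤ_[p] := ⟨rfl⟩

/-- The normalizing constant `(1 - p^α)/(1 - p^{-(α+1)})` of the Vladimirov–Taibleson
operator. -/
def vtConst (α : ℝ) : ℝ := (1 - (p : ℝ) ^ α) / (1 - (p : ℝ) ^ (-(α + 1)))

/-- The constant `(1 - p^{-1})/(1 - p^{-(α+1)})`. -/
def vtShift (α : ℝ) : ℝ := (1 - (p : ℝ)⁻¹) / (1 - (p : ℝ) ^ (-(α + 1)))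

variable (d : ℕ)

/-- Pairing of a `ℚ_p`-covector with a `ℤ_p`-vector. -/
def dotQZ (ξ : Fin d → ℚ_[p]) (x : Fin d → ℤ_[p]) : ℚ_[p] := ∑ i, ξ i * (x i : ℚ_[p])

/-- The directional Vladimirov–Taibleson operator of order `α` in the direction `V` on
`ℤ_p^d`, with respect to the normalized Haar measure `μ` on `ℤ_p`:
`∂_V^α f(x) = ((1-p^α)/(1-p^{-(α+1)})) ∫_{ℤ_p} (f(x - tV) - f(x))/|t|_p^{α+1} dt`. -/
def dirVT (α : ℝ) (V : Fin d → ℤ_[p]) (μ : Measure ℤ_[p])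
    (f : (Fin d → ℤ_[p]) → ℂ) (x : Fin d → ℤ_[p]) : ℂ :=
  (vtConst p α : ℂ) * ∫ t : ℤ_[p], (f (x - t • V) - f x) / ((‖t‖ ^ (α + 1) : ℝ) : ℂ) ∂μ

lemma padicFract_spec (x : ℚ_[p]) : ∃ (a : ℤ) (n : ℕ),
    padicFract p x = (a : ℚ) / (p : ℚ) ^ n ∧ ‖x - (a : ℚ_[p]) / (p : ℚ_[p]) ^ n‖ ≤ 1 := by
  have hp : (p : ℚ_[p]) ≠ 0 := by exact_mod_cast (Fact.out : p.Prime).ne_zero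
  have hpR : (0 : ℝ) < p := by exact_mod_cast (Fact.out : p.Prime).pos
  set n := (-x.valuation).toNat with hn
  have hle : ‖x * (p : ℚ_[p]) ^ n‖ ≤ 1 := by
    by_cases hx : x = 0
    · simp [hx]
    · rw [norm_mul, Padic.norm_eq_zpow_neg_valuation hx, Padic.norm_p_pow,
        ← zpow_add₀ hpR.ne']
      apply zpow_le_one_of_nonpos₀
      · exact_mod_cast (Fact.out : p.Prime).one_le
      · omega
  refine ⟨((padicToInt p (x * (p : ℚ_[p]) ^ n)).appr n : ℕ), n, ?_, ?_⟩
  · simp [padicFract, ← hn]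
  · have h := PadicInt.appr_spec n (padicToInt p (x * (p : ℚ_[p]) ^ n))
    rw [← PadicInt.norm_le_pow_iff_mem_span_pow] at h
    rw [PadicInt.norm_def] at h
    have hc : ((padicToInt p (x * (p : ℚ_[p]) ^ n) : ℤ_[p]) : ℚ_[p]) = x * (p : ℚ_[p]) ^ n := by
      have e : padicToInt p (x * (p : ℚ_[p]) ^ n) = (⟨x * (p : ℚ_[p]) ^ n, hle⟩ : ℤ_[p]) :=
        dif_pos hle
      rw [e]
    push_cast at h ⊢
    rw [hc] at h
    have : x - ((padicToInt p (x * (p : ℚ_[p]) ^ n)).appr n : ℚ_[p]) / (p : ℚ_[p]) ^ n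
        = (x * (p : ℚ_[p]) ^ n - ((padicToInt p (x * (p : ℚ_[p]) ^ n)).appr n : ℚ_[p]))
          * ((p : ℚ_[p]) ^ n)⁻¹ := by
      field_simp
    rw [this, norm_mul, norm_inv, Padic.norm_p_pow]
    rw [← div_eq_mul_inv, div_le_one (by positivity)]
    exact h

lemma frac_norm_le {a : ℤ} {n : ℕ} (h : ‖(a : ℚ_[p]) / (p : ℚ_[p]) ^ n‖ ≤ 1) :
    ∃ c : ℤ, (a : ℂ) / (p : ℂ) ^ n = c := by
  have hpR : (0 : ℝ) < p := by exact_mod_cast (Fact.out : p.Prime).pos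
  have hp : (p : ℂ) ≠ 0 := by exact_mod_cast (Fact.out : p.Prime).ne_zero
  rw [norm_div, Padic.norm_p_pow, div_le_one (by positivity),
    Padic.norm_int_le_pow_iff_dvd] at h
  obtain ⟨c, rfl⟩ := h
  refine ⟨c, ?_⟩
  push_cast
  field_simp

lemma eChar_of_norm_le {x : ℚ_[p]} (hx : ‖x‖ ≤ 1) : eChar p x = 1 := by
  have h : (-x.valuation).toNat = 0 := by
    have := (Padic.norm_le_one_iff_val_nonneg x).1 hx
    omega
  simp [eChar, padicFract, h, PadicInt.appr]

lemma norm_le_of_eChar {x : ℚ_[p]} (hx : eChar p x = 1) : ‖x‖ ≤ 1 := by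
  obtain ⟨a, n, h1, h2⟩ := padicFract_spec p x
  have hp : (p : ℂ) ≠ 0 := by exact_mod_cast (Fact.out : p.Prime).ne_zero
  rw [eChar, Complex.exp_eq_one_iff] at hx
  obtain ⟨c, hc⟩ := hx
  rw [mul_comm] at hc
  have hc' := mul_right_cancel₀ Complex.two_pi_I_ne_zero hc
  have hc2 : padicFract p x = (c : ℚ) := by exact_mod_cast hc'
  rw [h1] at hc2
  have hc3 : (a : ℚ_[p]) / (p : ℚ_[p]) ^ n = c := by
    have := congrArg (fun q : ℚ => (q : ℚ_[p])) hc2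
    push_cast at this
    exact this
  rw [hc3] at h2
  have : x = (x - c) + c := by ring
  rw [this]
  exact (Padic.nonarchimedean _ _).trans (max_le h2 (Padic.norm_int_le_one c))

lemma eChar_add (x y : ℚ_[p]) : eChar p (x + y) = eChar p x * eChar p y := by
  obtain ⟨a, n, h1, h2⟩ := padicFract_spec p x
  obtain ⟨b, m, h3, h4⟩ := padicFract_spec p y
  obtain ⟨c, k, h5, h6⟩ := padicFract_spec p (x + y)
  have hp : (p : ℂ) ≠ 0 := by exact_mod_cast (Fact.out : p.Prime).ne_zero
  have hpq : (p : ℚ_[p]) ≠ 0 := by exact_mod_cast (Fact.out : p.Prime).ne_zero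
  have key : ‖((c * p ^ n * p ^ m - a * p ^ k * p ^ m - b * p ^ k * p ^ n : ℤ) : ℚ_[p]) /
      (p : ℚ_[p]) ^ (k + n + m)‖ ≤ 1 := by
    have : ((c * p ^ n * p ^ m - a * p ^ k * p ^ m - b * p ^ k * p ^ n : ℤ) : ℚ_[p]) /
      (p : ℚ_[p]) ^ (k + n + m) = ((x - a / (p : ℚ_[p]) ^ n) + (y - b / (p : ℚ_[p]) ^ m)) +
        - (x + y - c / (p : ℚ_[p]) ^ k) := by
      push_cast
      field_simp
      ring
    rw [this]
    refine (Padic.nonarchimedean _ _).trans (max_le ?_ (by rwa [norm_neg]))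
    exact (Padic.nonarchimedean _ _).trans (max_le h2 h4)
  obtain ⟨e, he⟩ := frac_norm_le p key
  have he' : (c : ℂ) / (p : ℂ) ^ k = a / (p : ℂ) ^ n + b / (p : ℂ) ^ m + e := by
    rw [← he]
    push_cast
    field_simp
    ring
  simp only [eChar]
  rw [h1, h3, h5, ← Complex.exp_add]
  push_cast
  rw [he', Complex.exp_eq_exp_iff_exists_int]
  exact ⟨e, by ring⟩

/-- closed ball of radius `p^{-k}` -/
def pball (k : ℕ) : Set ℤ_[p] := {t | ‖t‖ ≤ (p : ℝ) ^ (-(k : ℤ))}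

lemma pball_meas (k : ℕ) : MeasurableSet (pball p k) :=
  (isClosed_le continuous_norm continuous_const).measurableSet

lemma pball_measure (μ : Measure ℤ_[p]) [μ.IsAddLeftInvariant] (hprob : μ Set.univ = 1) (k : ℕ) :
    μ.real (pball p k) = ((p : ℝ) ^ k)⁻¹ := by
  have hp0 : p ≠ 0 := (Fact.out : p.Prime).ne_zero
  have : NeZero (p ^ k) := ⟨pow_ne_zero _ hp0⟩
  let f : ℤ_[p] →+ ZMod (p ^ k) := (PadicInt.toZModPow k : ℤ_[p] →+* ZMod (p ^ k)).toAddMonoidHom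
  have hset : (f.ker : Set ℤ_[p]) = pball p k := by
    ext t
    have : t ∈ RingHom.ker (PadicInt.toZModPow k : ℤ_[p] →+* ZMod (p ^ k)) ↔
        ‖t‖ ≤ (p : ℝ) ^ (-(k : ℤ)) := by
      rw [PadicInt.ker_toZModPow, ← PadicInt.norm_le_pow_iff_mem_span_pow]
    exact this
  have hsurj : Function.Surjective f := ZMod.ringHom_surjective (PadicInt.toZModPow k)
  have hidx : f.ker.index = p ^ k := by
    rw [AddSubgroup.index_ker, AddMonoidHom.range_eq_top.2 hsurj]
    simp
  have : f.ker.FiniteIndex := ⟨by rw [hidx]; exact pow_ne_zero _ hp0⟩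
  have h := AddSubgroup.index_mul_measure f.ker (by rw [hset]; exact pball_meas p k) μ
  rw [hset, hidx, hprob] at h
  have h2 := congrArg ENNReal.toReal h
  rw [ENNReal.toReal_mul] at h2
  simp at h2
  exact eq_inv_of_mul_eq_one_right h2

lemma psi_cont (a : ℚ_[p]) : Continuous (fun t : ℤ_[p] => eChar p (-(t * a))) := by
  rw [continuous_iff_continuousAt]
  intro t₀
  have : (fun t : ℤ_[p] => eChar p (-(t * a))) =ᶠ[nhds t₀] fun _ => eChar p (-(t₀ * a)) := by
    have hc : Filter.Tendsto (fun t : ℤ_[p] => ‖-(((t : ℚ_[p]) - t₀) * a)‖) (nhds t₀) (nhds 0) := by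
      have : Continuous (fun t : ℤ_[p] => ‖-(((t : ℚ_[p]) - t₀) * a)‖) := by fun_prop
      simpa using this.tendsto t₀
    filter_upwards [hc.eventually (gt_mem_nhds one_pos)] with t ht
    have : -((t : ℚ_[p]) * a) = -(((t : ℚ_[p]) - t₀) * a) + -(t₀ * a) := by ring
    rw [this, eChar_add, eChar_of_norm_le p ht.le, one_mul]
  exact this.continuousAt

lemma psi_int (μ : Measure ℤ_[p]) [IsProbabilityMeasure μ] (a : ℚ_[p]) :
    Integrable (fun t : ℤ_[p] => eChar p (-(t * a))) μ :=
  (psi_cont p a).integrable_of_hasCompactSupport (HasCompactSupport.of_compactSpace _)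

/-- Integral of the character over a ball on which it is not trivial. -/
lemma ball_int_zero (μ : Measure ℤ_[p]) [μ.IsAddRightInvariant]
    (a : ℚ_[p]) (m k : ℕ) (ha : ‖a‖ = (p : ℝ) ^ m) (hk : k < m) :
    ∫ t in pball p k, eChar p (-((t : ℤ_[p]) * a)) ∂μ = 0 := by
  have hpR : (1 : ℝ) < p := by exact_mod_cast (Fact.out : p.Prime).one_lt
  set t₀ : ℤ_[p] := (p : ℤ_[p]) ^ k with ht₀
  have hn0 : ‖t₀‖ = (p : ℝ) ^ (-(k : ℤ)) := PadicInt.norm_p_pow k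
  have hne : eChar p (-(t₀ * a)) ≠ 1 := by
    intro h
    have := norm_le_of_eChar p h
    rw [norm_neg, norm_mul, ← PadicInt.norm_def, hn0, ha, zpow_neg, zpow_natCast,
      inv_mul_le_iff₀ (by positivity), mul_one] at this
    exact absurd this (not_le.2 (pow_lt_pow_right₀ hpR hk))
  rw [← integral_indicator (pball_meas p k)]
  set F := (pball p k).indicator (fun t : ℤ_[p] => eChar p (-((t : ℤ_[p]) * a))) with hF
  have h1 : ∫ t, F (t + t₀) ∂μ = ∫ t, F t ∂μ := integral_add_right_eq_self F t₀
  have h2 : ∀ t, F (t + t₀) = eChar p (-(t₀ * a)) * F t := by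
    intro t
    have hmem : t + t₀ ∈ pball p k ↔ t ∈ pball p k := by
      simp only [pball, Set.mem_ofPred_eq]
      constructor
      · intro h
        have e : t = (t + t₀) + -t₀ := by ring
        rw [e]
        exact (PadicInt.nonarchimedean _ _).trans (max_le h (by rw [norm_neg, hn0]))
      · intro h
        exact (PadicInt.nonarchimedean _ _).trans (max_le h hn0.le)
    by_cases ht : t ∈ pball p k
    · rw [hF, Set.indicator_of_mem (hmem.2 ht), Set.indicator_of_mem ht, ← eChar_add]
      congr 1
      push_cast
      ring
    · rw [hF, Set.indicator_of_notMem (fun h => ht (hmem.1 h)), Set.indicator_of_notMem ht,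
        mul_zero]
  simp_rw [h2] at h1
  rw [integral_const_mul] at h1
  have h3 : (eChar p (-(t₀ * a)) - 1) * ∫ t, F t ∂μ = 0 := by rw [sub_mul, h1, one_mul, sub_self]
  exact (mul_eq_zero.1 h3).resolve_left (sub_ne_zero.2 hne)

/-- The character of `t`, minus one. -/
def psi1 (a : ℚ_[p]) (t : ℤ_[p]) : ℂ := eChar p (-((t : ℚ_[p]) * a)) - 1

lemma pointwise (α : ℝ) (a : ℚ_[p]) (m : ℕ) (ha : ‖a‖ = (p : ℝ) ^ m) (t : ℤ_[p]) :
    (eChar p (-(t * a)) - 1) / ((‖t‖ ^ (α + 1) : ℝ) : ℂ) =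
    ∑ k ∈ Finset.range m, (((p : ℝ) ^ (α + 1) : ℝ) : ℂ) ^ k *
      ((pball p k).indicator (psi1 p a) t -
       (pball p (k + 1)).indicator (psi1 p a) t) := by
  have hpR : (0 : ℝ) < p := by exact_mod_cast (Fact.out : p.Prime).pos
  have hpR1 : (1 : ℝ) ≤ p := by exact_mod_cast (Fact.out : p.Prime).one_le
  by_cases ht : t = 0
  · subst ht
    have : eChar p (-(((0 : ℤ_[p]) : ℚ_[p]) * a)) - 1 = 0 := by
      rw [eChar_of_norm_le p (by simp), sub_self]
    have h0 : ∀ k, (pball p k).indicator (psi1 p a) 0 = 0 := by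
      intro k
      apply Set.indicator_apply_eq_zero.2
      intro _
      exact this
    rw [this, zero_div]
    simp only [h0, sub_self, mul_zero, Finset.sum_const_zero]
  have hmem : ∀ k, t ∈ pball p k ↔ k ≤ t.valuation :=
    fun k => PadicInt.norm_le_pow_iff_le_valuation t ht k
  have hind : ∀ k, (pball p k).indicator (psi1 p a) t =
      if k ≤ t.valuation then eChar p (-(t * a)) - 1 else 0 := by
    intro k
    split_ifs with h
    · rw [Set.indicator_of_mem ((hmem k).2 h), psi1]
    · rw [Set.indicator_of_notMem (fun h' => h ((hmem k).1 h'))]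
  simp only [hind]
  set v := t.valuation with hv
  have hnt : ‖t‖ = (p : ℝ) ^ (-(v : ℤ)) := PadicInt.norm_eq_zpow_neg_valuation ht
  have hterm : ∀ k ∈ Finset.range m, (((p : ℝ) ^ (α + 1) : ℝ) : ℂ) ^ k *
      ((if k ≤ v then eChar p (-(t * a)) - 1 else 0) -
       (if k + 1 ≤ v then eChar p (-(t * a)) - 1 else 0)) =
      if k = v then (((p : ℝ) ^ (α + 1) : ℝ) : ℂ) ^ v * (eChar p (-(t * a)) - 1) else 0 := by
    intro k _
    rcases lt_trichotomy k v with h | h | h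
    · rw [if_pos h.le, if_pos (by omega), if_neg (by omega)]; ring
    · subst h; simp
    · rw [if_neg (by omega), if_neg (by omega), if_neg (by omega)]; ring
  rw [Finset.sum_congr rfl hterm, Finset.sum_ite_eq']
  have hpow : ‖t‖ ^ (α + 1) = (((p : ℝ) ^ (α + 1)) ^ v)⁻¹ := by
    rw [hnt, zpow_neg, zpow_natCast, Real.inv_rpow (by positivity), ← Real.rpow_natCast,
      ← Real.rpow_natCast, ← Real.rpow_mul hpR.le, ← Real.rpow_mul hpR.le, mul_comm]
  rw [hpow]
  split_ifs with h
  · push_cast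
    rw [div_inv_eq_mul, mul_comm]
  · rw [eChar_of_norm_le p, sub_self, zero_div]
    rw [norm_neg, norm_mul, ← PadicInt.norm_def, hnt, ha, zpow_neg, zpow_natCast,
      inv_mul_le_iff₀ (by positivity), mul_one]
    exact pow_le_pow_right₀ hpR1 (by simpa using h)

lemma ball_int (μ : Measure ℤ_[p]) [IsProbabilityMeasure μ] [μ.IsAddLeftInvariant]
    [μ.IsAddRightInvariant] (a : ℚ_[p]) (m k : ℕ) (ha : ‖a‖ = (p : ℝ) ^ m) :
    ∫ t, (pball p k).indicator (psi1 p a) t ∂μ =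
      if k < m then -((p : ℂ) ^ k)⁻¹ else 0 := by
  have hpR : (0 : ℝ) < p := by exact_mod_cast (Fact.out : p.Prime).pos
  have hpR1 : (1 : ℝ) ≤ p := by exact_mod_cast (Fact.out : p.Prime).one_le
  rw [integral_indicator (pball_meas p k)]
  unfold psi1
  split_ifs with h
  · rw [integral_sub (psi_int p μ a).integrableOn (integrable_const _),
      ball_int_zero p μ a m k ha h, setIntegral_const, pball_measure p μ measure_univ]
    simp
  · apply setIntegral_eq_zero_of_forall_eq_zero
    intro t ht
    rw [eChar_of_norm_le p, sub_self]
    rw [norm_neg, norm_mul, ← PadicInt.norm_def, ha]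
    have ht' : ‖t‖ ≤ (p : ℝ) ^ (-(k : ℤ)) := ht
    rw [zpow_neg, zpow_natCast] at ht'
    calc ‖t‖ * (p : ℝ) ^ m ≤ ((p : ℝ) ^ k)⁻¹ * (p : ℝ) ^ m := by gcongr
      _ ≤ 1 := by
        rw [inv_mul_le_iff₀ (by positivity), mul_one]
        exact pow_le_pow_right₀ hpR1 (by simpa using h)

lemma total_int (α : ℝ) (μ : Measure ℤ_[p]) [IsProbabilityMeasure μ] [μ.IsAddLeftInvariant]
    [μ.IsAddRightInvariant] (a : ℚ_[p]) (m : ℕ) (ha : ‖a‖ = (p : ℝ) ^ m) :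
    ∫ t : ℤ_[p], (eChar p (-(t * a)) - 1) / ((‖t‖ ^ (α + 1) : ℝ) : ℂ) ∂μ =
    ∑ k ∈ Finset.range m, (((p : ℝ) ^ (α + 1) : ℝ) : ℂ) ^ k *
      ((if k < m then -((p : ℂ) ^ k)⁻¹ else 0) -
        (if k + 1 < m then -((p : ℂ) ^ (k + 1))⁻¹ else 0)) := by
  have hi : ∀ k, Integrable
      ((pball p k).indicator (psi1 p a)) μ :=
    fun k => ((psi_int p μ a).sub (integrable_const _)).indicator (pball_meas p k)
  simp_rw [pointwise p α a m ha]
  rw [integral_finsetSum _ (fun k _ => Integrable.const_mul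
    (f := fun t => (pball p k).indicator (psi1 p a) t - (pball p (k + 1)).indicator (psi1 p a) t)
    ((hi k).sub (hi (k + 1))) _)]
  refine Finset.sum_congr rfl fun k _ => ?_
  rw [integral_const_mul, integral_sub (hi k) (hi (k + 1)), ball_int p μ a m k ha,
    ball_int p μ a m (k + 1) ha]

lemma eigenvalue (α : ℝ) (hα : 0 < α) (M : ℕ) :
    (vtConst p α : ℂ) * ∑ k ∈ Finset.range (M + 1), (((p : ℝ) ^ (α + 1) : ℝ) : ℂ) ^ k *
      ((if k < M + 1 then -((p : ℂ) ^ k)⁻¹ else 0) -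
        (if k + 1 < M + 1 then -((p : ℂ) ^ (k + 1))⁻¹ else 0)) =
    ((((p : ℝ) ^ (M + 1)) ^ α - vtShift p α : ℝ) : ℂ) := by
  have hpR : (0 : ℝ) < p := by exact_mod_cast (Fact.out : p.Prime).pos
  have hpR1 : (1 : ℝ) < p := by exact_mod_cast (Fact.out : p.Prime).one_lt
  have hA1 : 1 < (p : ℝ) ^ α := Real.one_lt_rpow hpR1 hα
  have hM : ((p : ℝ) ^ (M + 1)) ^ α = ((p : ℝ) ^ α) ^ (M + 1) := by
    rw [← Real.rpow_natCast, ← Real.rpow_natCast, ← Real.rpow_mul hpR.le, ← Real.rpow_mul hpR.le,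
      mul_comm]
  have hw : (p : ℝ) ^ (α + 1) = (p : ℝ) ^ α * p := by rw [Real.rpow_add hpR, Real.rpow_one]
  unfold vtConst vtShift
  rw [hM, Real.rpow_neg hpR.le, hw]
  generalize (p : ℝ) ^ α = A at hA1
  have hlt : 1 < A * p := by nlinarith
  have hden : 1 - (A * p)⁻¹ ≠ 0 := by
    have := inv_lt_one_of_one_lt₀ hlt
    linarith
  have hreal : (∑ k ∈ Finset.range (M + 1), (A * p) ^ k *
      ((if k < M + 1 then -((p : ℝ) ^ k)⁻¹ else 0) -
        (if k + 1 < M + 1 then -((p : ℝ) ^ (k + 1))⁻¹ else 0))) =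
      - (A ^ M + (1 - (p : ℝ)⁻¹) * ((A ^ M - 1) / (A - 1))) := by
    rw [Finset.sum_range_succ, ← geom_sum_eq hA1.ne', Finset.mul_sum, neg_add,
      ← Finset.sum_neg_distrib, add_comm]
    congr 1
    · simp [mul_pow, hpR.ne']
    · refine Finset.sum_congr rfl fun k hk => ?_
      have := Finset.mem_range.1 hk
      rw [if_pos (by omega), if_pos (by omega)]
      field_simp
      ring
  have hfin : (1 - A) / (1 - (A * p)⁻¹) * (- (A ^ M + (1 - (p : ℝ)⁻¹) * ((A ^ M - 1) / (A - 1))))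
      = A ^ (M + 1) - (1 - (p : ℝ)⁻¹) / (1 - (A * p)⁻¹) := by
    have h1 : A - 1 ≠ 0 := by linarith
    have h2 : A * p ≠ 0 := by positivity
    have h3 : (1 - A) * (- (A ^ M + (1 - (p : ℝ)⁻¹) * ((A ^ M - 1) / (A - 1)))) =
        A ^ (M + 1) * (1 - (A * p)⁻¹) - (1 - (p : ℝ)⁻¹) := by
      have hA0 : A ≠ 0 := by linarith
      field_simp
      ring
    rw [div_mul_eq_mul_div, h3, sub_div, mul_div_cancel_right₀ _ hden]
  rw [← hfin, ← hreal]
  push_cast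
  congr 1
  refine Finset.sum_congr rfl fun k _ => ?_
  split_ifs <;> push_cast <;> ring

/-- The character `f(x) = e^{2πi{ξ·x}_p}` on `ℤ_p^d` is an eigenfunction of
the directional Vladimirov–Taibleson operator `∂_V^α`, with eigenvalue
`|V·ξ|_p^α - (1-p^{-1})/(1-p^{-(α+1)})` when `|V·ξ|_p > 1`, and eigenvalue `0` when
`|V·ξ|_p ≤ 1`. -/
theorem dirVT_eigenfunction (α : ℝ) (hα : 0 < α) (V : Fin d → ℤ_[p]) (ξ : Fin d → ℚ_[p])
    (μ : Measure ℤ_[p]) (hinv : ∀ v : ℤ_[p], μ.map (· + v) = μ) (hprob : μ Set.univ = 1)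
    (x : Fin d → ℤ_[p]) :
    dirVT p d α V μ (fun u => eChar p (dotQZ p d ξ u)) x =
      ((if 1 < ‖dotQZ p d ξ V‖ then (‖dotQZ p d ξ V‖ ^ α - vtShift p α : ℝ) else 0 : ℝ) : ℂ) *
        eChar p (dotQZ p d ξ x) := by
  have hpR1 : (1 : ℝ) < p := by exact_mod_cast (Fact.out : p.Prime).one_lt
  have : IsProbabilityMeasure μ := ⟨hprob⟩
  have : μ.IsAddRightInvariant := ⟨hinv⟩
  have : μ.IsAddLeftInvariant := ⟨fun v => by simpa [add_comm] using hinv v⟩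
  set a := dotQZ p d ξ V with ha
  have hdot : ∀ t : ℤ_[p], dotQZ p d ξ (x - t • V) = dotQZ p d ξ x + -(t * a) := by
    intro t
    simp only [ha, dotQZ, Finset.mul_sum, ← Finset.sum_neg_distrib, ← Finset.sum_add_distrib]
    refine Finset.sum_congr rfl fun i _ => ?_
    simp
    ring
  have hint : ∀ t : ℤ_[p], (eChar p (dotQZ p d ξ (x - t • V)) - eChar p (dotQZ p d ξ x)) /
      ((‖t‖ ^ (α + 1) : ℝ) : ℂ) = eChar p (dotQZ p d ξ x) *
        ((eChar p (-(t * a)) - 1) / ((‖t‖ ^ (α + 1) : ℝ) : ℂ)) := by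
    intro t
    rw [hdot, eChar_add]
    ring
  unfold dirVT
  simp_rw [hint]
  rw [integral_const_mul]
  split_ifs with h
  · have ha0 : a ≠ 0 := by
      rintro h0
      rw [h0, norm_zero] at h
      linarith
    obtain ⟨M, hM⟩ : ∃ M : ℕ, ‖a‖ = (p : ℝ) ^ (M + 1) := by
      have hn := Padic.norm_eq_zpow_neg_valuation ha0
      have hv : 0 < -a.valuation := by
        rw [hn] at h
        exact (one_lt_zpow_iff_right₀ hpR1).1 h
      refine ⟨(-a.valuation - 1).toNat, ?_⟩
      rw [hn, ← zpow_natCast]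
      congr 1
      push_cast
      omega
    rw [total_int p α μ a (M + 1) hM, hM, ← eigenvalue p α hα M]
    ring
  · have : ∀ t : ℤ_[p], eChar p (-(t * a)) = 1 := by
      intro t
      apply eChar_of_norm_le
      rw [norm_neg, norm_mul]
      exact mul_le_one₀ t.2 (norm_nonneg _) (not_lt.1 h)
    simp [this]
end
end

section
/- For α > 0 and τ ∈ Q_p/Z_p with |τ|_p = p^m > 1, the integral ((1-p^α)/(1-p^{-(α+1)})) ∫_{Z_p} (e^{2πi{τ t}_p} - 1)/|t|_p^{α+1} dt equals |τ|_p^α - (1-p^{-1})/(1-p^{-(α+1)}). -/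
open MeasureTheory

noncomputable section

variable (p : ℕ) [Fact p.Prime]

variable (d : ℕ)

lemma aux_int (q : ℚ) (hq : ∃ (n : ℕ) (a : ℤ), q = a / (p : ℚ) ^ n) (h : ‖(q : ℚ_[p])‖ ≤ 1) :
    ∃ z : ℤ, q = z := by
  obtain ⟨n, a, rfl⟩ := hq
  have hp0 : (p : ℚ) ≠ 0 := by exact_mod_cast (Fact.out : p.Prime).ne_zero
  have hpos : (0 : ℝ) < p := by exact_mod_cast (Fact.out : p.Prime).pos
  have h1 : ‖(a : ℚ_[p])‖ ≤ (p : ℝ) ^ (-n : ℤ) := by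
    push_cast at h
    rw [norm_div, norm_pow, Padic.norm_p, div_le_one (by positivity)] at h
    simpa using h
  rw [Padic.norm_int_le_pow_iff_dvd] at h1
  obtain ⟨z, rfl⟩ := h1
  refine ⟨z, ?_⟩
  push_cast
  field_simp

lemma fract_form (x : ℚ_[p]) : ∃ (n : ℕ) (a : ℤ), padicFract p x = a / (p : ℚ) ^ n :=
  ⟨(-x.valuation).toNat,
    ((padicToInt p (x * (p : ℚ_[p]) ^ (-x.valuation).toNat)).appr (-x.valuation).toNat : ℕ), by
      unfold padicFract; rw [Int.cast_natCast]⟩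

lemma fract_spec (x : ℚ_[p]) : ‖x - ((padicFract p x : ℚ) : ℚ_[p])‖ ≤ 1 := by
  have hp0 : (p : ℚ_[p]) ≠ 0 := by exact_mod_cast (Fact.out : p.Prime).ne_zero
  have hpos : (0 : ℝ) < p := by exact_mod_cast (Fact.out : p.Prime).pos
  have hp1 : (1 : ℝ) ≤ p := by exact_mod_cast (Fact.out : p.Prime).one_le
  unfold padicFract
  set n := (-x.valuation).toNat with hn
  have hx : ‖x * (p : ℚ_[p]) ^ n‖ ≤ 1 := by
    by_cases h0 : x = 0
    · simp [h0]
    rw [norm_mul, norm_pow, Padic.norm_p, Padic.norm_eq_zpow_neg_valuation h0, inv_pow,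
      ← div_eq_mul_inv, div_le_one (by positivity), ← zpow_natCast]
    exact zpow_le_zpow_right₀ hp1 (Int.self_le_toNat _)
  have hs := PadicInt.appr_spec n (padicToInt p (x * (p : ℚ_[p]) ^ n))
  rw [← PadicInt.norm_le_pow_iff_mem_span_pow, PadicInt.norm_def] at hs
  have hc : ((padicToInt p (x * (p : ℚ_[p]) ^ n) : ℤ_[p]) : ℚ_[p]) = x * (p : ℚ_[p]) ^ n := by
    have h1 : padicToInt p (x * (p : ℚ_[p]) ^ n) = (⟨x * (p : ℚ_[p]) ^ n, hx⟩ : ℤ_[p]) :=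
      dif_pos hx
    rw [h1]
  generalize (padicToInt p (x * (p : ℚ_[p]) ^ n)).appr n = b at *
  push_cast at hs ⊢
  rw [hc] at hs
  have : x - (b : ℚ_[p]) / (p : ℚ_[p]) ^ n = (x * (p : ℚ_[p]) ^ n - b) / (p : ℚ_[p]) ^ n := by
    field_simp
  rw [this, norm_div, norm_pow, Padic.norm_p, div_le_one (by positivity)]
  simpa using hs

lemma form_add {q r : ℚ} (hq : ∃ (n : ℕ) (a : ℤ), q = a / (p : ℚ) ^ n)
    (hr : ∃ (n : ℕ) (a : ℤ), r = a / (p : ℚ) ^ n) :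
    ∃ (n : ℕ) (a : ℤ), q + r = a / (p : ℚ) ^ n := by
  obtain ⟨n, a, rfl⟩ := hq
  obtain ⟨k, b, rfl⟩ := hr
  have hp0 : (p : ℚ) ≠ 0 := by exact_mod_cast (Fact.out : p.Prime).ne_zero
  refine ⟨n + k, a * p ^ k + p ^ n * b, ?_⟩
  push_cast
  rw [pow_add]
  field_simp

lemma form_neg {q : ℚ} (hq : ∃ (n : ℕ) (a : ℤ), q = a / (p : ℚ) ^ n) :
    ∃ (n : ℕ) (a : ℤ), -q = a / (p : ℚ) ^ n := by
  obtain ⟨n, a, rfl⟩ := hq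
  exact ⟨n, -a, by push_cast; ring⟩

lemma eChar_eq_one_iff (x : ℚ_[p]) : eChar p x = 1 ↔ ‖x‖ ≤ 1 := by
  have hs := fract_spec p x
  constructor
  · intro h
    unfold eChar at h
    rw [Complex.exp_eq_one_iff] at h
    obtain ⟨z, hz⟩ := h
    have hpi : (2 * Real.pi * Complex.I : ℂ) ≠ 0 := Complex.two_pi_I_ne_zero
    have h2 : (padicFract p x : ℂ) = z := by
      apply mul_left_cancel₀ hpi
      rw [hz]; ring
    have h3 : padicFract p x = z := by exact_mod_cast h2
    rw [h3] at hs
    have : x = (x - ((z : ℚ) : ℚ_[p])) + ((z : ℤ) : ℚ_[p]) := by push_cast; ring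
    rw [this]
    exact (Padic.nonarchimedean _ _).trans (max_le hs (Padic.norm_int_le_one z))
  · intro h
    obtain ⟨z, hz⟩ := aux_int p (padicFract p x) (fract_form p x) (by
      have : ((padicFract p x : ℚ) : ℚ_[p]) = -(x - ((padicFract p x : ℚ) : ℚ_[p])) + x := by ring
      rw [this]
      refine (Padic.nonarchimedean _ _).trans (max_le ?_ h)
      rwa [norm_neg])
    unfold eChar
    rw [hz, Complex.exp_eq_one_iff]
    exact ⟨z, by push_cast; ring⟩

lemma eChar_norm (x : ℚ_[p]) : ‖eChar p x‖ = 1 := by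
  unfold eChar
  rw [show (2 * Real.pi * Complex.I * (padicFract p x : ℂ)) =
    ((2 * Real.pi * (padicFract p x : ℝ) : ℝ) : ℂ) * Complex.I by push_cast; ring]
  exact Complex.norm_exp_ofReal_mul_I _

lemma eChar_continuous (τ : ℚ_[p]) : Continuous (fun t : ℤ_[p] => eChar p (τ * (t : ℚ_[p]))) := by
  apply IsLocallyConstant.continuous
  rw [IsLocallyConstant.iff_eventually_eq]
  intro t
  have h : Filter.Tendsto (fun s : ℤ_[p] => ‖τ * ((s : ℚ_[p]) - (t : ℚ_[p]))‖) (nhds t)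
      (nhds ‖τ * ((t : ℚ_[p]) - (t : ℚ_[p]))‖) := by
    apply Continuous.tendsto
    fun_prop
  rw [sub_self, mul_zero, norm_zero] at h
  filter_upwards [h.eventually (gt_mem_nhds zero_lt_one)] with s hs
  have : τ * (s : ℚ_[p]) = τ * ((s : ℚ_[p]) - (t : ℚ_[p])) + τ * (t : ℚ_[p]) := by ring
  rw [this, eChar_add, (eChar_eq_one_iff p _).2 hs.le, one_mul]

/-- The ball `p^k ℤ_p`. -/
def bl (k : ℕ) : Set ℤ_[p] := {t | ‖t‖ ≤ (p : ℝ) ^ (-k : ℤ)}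

lemma bl_meas (k : ℕ) : MeasurableSet (bl p k) :=
  (isClosed_le continuous_norm continuous_const).measurableSet

lemma bl_measure (μ : MeasureTheory.Measure ℤ_[p])
    (hinv : ∀ v : ℤ_[p], μ.map (· + v) = μ) (hprob : μ Set.univ = 1) (k : ℕ) :
    μ.real (bl p k) = ((p : ℝ) ^ k)⁻¹ := by
  have hpos : (0 : ℝ) < p := by exact_mod_cast (Fact.out : p.Prime).pos
  have : NeZero (p ^ k) := ⟨pow_ne_zero _ (Fact.out : p.Prime).ne_zero⟩
  have : μ.IsAddLeftInvariant := ⟨fun v => by simpa only [add_comm] using hinv v⟩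
  set H : AddSubgroup ℤ_[p] := (PadicInt.toZModPow k : ℤ_[p] →+* ZMod (p ^ k)).toAddMonoidHom.ker
  have hidx : H.index = p ^ k := by
    rw [AddSubgroup.index_ker, AddMonoidHom.range_eq_top.2, AddSubgroup.card_top, Nat.card_zmod]
    exact ZMod.ringHom_surjective (PadicInt.toZModPow k)
  have hH : (H : Set ℤ_[p]) = bl p k := by
    ext t
    have := PadicInt.norm_le_pow_iff_mem_span_pow t k
    rw [← PadicInt.ker_toZModPow] at this
    exact this.symm
  have : H.FiniteIndex := ⟨by rw [hidx]; exact NeZero.ne _⟩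
  have h := AddSubgroup.index_mul_measure H (by rw [hH]; exact bl_meas p k) μ
  rw [hidx, hH, hprob] at h
  have h2 := congrArg ENNReal.toReal h
  rw [ENNReal.toReal_mul] at h2
  simp at h2
  rw [Measure.real]
  exact eq_inv_of_mul_eq_one_right h2

/-- Integrals of `χ - 1` over balls. -/
lemma bl_integral (τ : ℚ_[p]) (m : ℕ) (hm : 0 < m)
    (hτ : ‖τ‖ = (p : ℝ) ^ (m : ℤ)) (μ : MeasureTheory.Measure ℤ_[p])
    (hinv : ∀ v : ℤ_[p], μ.map (· + v) = μ) (hprob : μ Set.univ = 1) (k : ℕ) (hk : k < m) :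
    ∫ t, (bl p k).indicator (fun t : ℤ_[p] => eChar p (τ * (t : ℚ_[p])) - 1) t ∂μ =
      -((p : ℂ) ^ k)⁻¹ := by
  have hpos : (0 : ℝ) < p := by exact_mod_cast (Fact.out : p.Prime).pos
  have hp1 : (1 : ℝ) < p := by exact_mod_cast (Fact.out : p.Prime).one_lt
  have : IsProbabilityMeasure μ := ⟨hprob⟩
  have : μ.IsAddLeftInvariant := ⟨fun v => by simpa only [add_comm] using hinv v⟩
  have : μ.IsAddRightInvariant := ⟨hinv⟩
  set χ : ℤ_[p] → ℂ := fun t => eChar p (τ * (t : ℚ_[p])) with hχ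
  have hint : Integrable χ μ :=
    Integrable.of_bound (eChar_continuous p τ).aestronglyMeasurable 1
      (Filter.Eventually.of_forall fun t => (eChar_norm p _).le)
  have hzero : ∫ t, (bl p k).indicator χ t ∂μ = 0 := by
    set v : ℤ_[p] := (p : ℤ_[p]) ^ (m - 1) with hv
    have hvn : ‖v‖ = (p : ℝ) ^ (-((m - 1 : ℕ) : ℤ)) := by
      rw [hv, PadicInt.norm_p_pow]
    have hvb : ‖v‖ ≤ (p : ℝ) ^ (-k : ℤ) := by
      rw [hvn]; exact zpow_le_zpow_right₀ hp1.le (by omega)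
    have hne : χ v ≠ 1 := by
      rw [hχ]
      simp only
      rw [Ne, eChar_eq_one_iff, norm_mul, hτ, ← PadicInt.norm_def, hvn,
        ← zpow_add₀ hpos.ne', show (m : ℤ) + -((m - 1 : ℕ) : ℤ) = 1 by omega, zpow_one]
      exact not_le.2 hp1
    have hsh := integral_add_right_eq_self (μ := μ) ((bl p k).indicator χ) v
    have hpt : ∀ t, (bl p k).indicator χ (t + v) = χ v * (bl p k).indicator χ t := by
      intro t
      have hmem : t + v ∈ bl p k ↔ t ∈ bl p k := by
        constructor
        · intro h
          have : t = (t + v) + -v := by ring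
          rw [this]
          exact (PadicInt.nonarchimedean _ _).trans (max_le h (by rwa [norm_neg]))
        · intro h
          exact (PadicInt.nonarchimedean _ _).trans (max_le h hvb)
      by_cases ht : t ∈ bl p k
      · rw [Set.indicator_of_mem ht, Set.indicator_of_mem (hmem.2 ht)]
        simp only [hχ]
        rw [← eChar_add]
        congr 1
        push_cast
        ring
      · rw [Set.indicator_of_notMem ht, Set.indicator_of_notMem (mt hmem.1 ht), mul_zero]
    simp_rw [hpt] at hsh
    rw [integral_const_mul] at hsh
    have : (χ v - 1) * ∫ t, (bl p k).indicator χ t ∂μ = 0 := by rw [sub_mul, hsh]; ring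
    exact (mul_eq_zero.1 this).resolve_left (sub_ne_zero.2 hne)
  rw [integral_indicator (bl_meas p k)] at hzero ⊢
  rw [integral_sub hint.integrableOn (integrable_const _), hzero, setIntegral_const,
    bl_measure p μ hinv hprob]
  simp

/-- For `α > 0` and `τ` with `|τ|_p = p^m > 1`,
`((1-p^α)/(1-p^{-(α+1)})) ∫_{ℤ_p} (e^{2πi{τt}_p} - 1)/|t|_p^{α+1} dt
  = |τ|_p^α - (1-p^{-1})/(1-p^{-(α+1)})`. -/
theorem vt_integral_of_char (α : ℝ) (hα : 0 < α) (τ : ℚ_[p]) (m : ℕ) (hm : 0 < m)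
    (hτ : ‖τ‖ = (p : ℝ) ^ (m : ℤ)) (μ : MeasureTheory.Measure ℤ_[p])
    (hinv : ∀ v : ℤ_[p], μ.map (· + v) = μ) (hprob : μ Set.univ = 1) :
    (vtConst p α : ℂ) *
        ∫ t : ℤ_[p], (eChar p (τ * (t : ℚ_[p])) - 1) / ((‖t‖ ^ (α + 1) : ℝ) : ℂ) ∂μ =
      ((‖τ‖ ^ α - vtShift p α : ℝ) : ℂ) := by
  have hpos : (0 : ℝ) < p := by exact_mod_cast (Fact.out : p.Prime).pos
  have hp1 : (1 : ℝ) < p := by exact_mod_cast (Fact.out : p.Prime).one_lt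
  have : IsProbabilityMeasure μ := ⟨hprob⟩
  set g : ℤ_[p] → ℂ := fun t => eChar p (τ * (t : ℚ_[p])) - 1 with hg
  have hgint : Integrable g μ :=
    (Integrable.of_bound (eChar_continuous p τ).aestronglyMeasurable 1
      (Filter.Eventually.of_forall fun t => (eChar_norm p _).le)).sub (integrable_const _)
  have hgz : ∀ t ∈ bl p m, g t = 0 := by
    intro t ht
    simp only [hg]
    rw [sub_eq_zero, eChar_eq_one_iff, norm_mul, hτ, ← PadicInt.norm_def]
    calc (p : ℝ) ^ (m : ℤ) * ‖t‖ ≤ (p : ℝ) ^ (m : ℤ) * (p : ℝ) ^ (-m : ℤ) := by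
          gcongr; exact ht
      _ = 1 := by rw [← zpow_add₀ hpos.ne']; simp
  set A : ℝ := (p : ℝ) ^ α with hA
  have hA1 : 1 < A := Real.one_lt_rpow hp1 hα
  have hpt : ∀ t : ℤ_[p], g t / ((‖t‖ ^ (α + 1) : ℝ) : ℂ) =
      ∑ k ∈ Finset.range m, (((A * p) ^ k : ℝ) : ℂ) *
        ((bl p k).indicator g t - (bl p (k + 1)).indicator g t) := by
    intro t
    by_cases ht : t ∈ bl p m
    · have h0 : ∀ k, (bl p k).indicator g t = 0 := fun k => by
        by_cases hk : t ∈ bl p k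
        · rw [Set.indicator_of_mem hk, hgz t ht]
        · rw [Set.indicator_of_notMem hk]
      simp [h0, hgz t ht]
    · have ht0 : t ≠ 0 := by
        rintro rfl
        apply ht
        simp only [bl, Set.mem_ofPred_eq, norm_zero]
        positivity
      have hn := PadicInt.norm_eq_zpow_neg_valuation ht0
      set j := t.valuation with hj
      have hmem : ∀ k : ℕ, t ∈ bl p k ↔ k ≤ j := by
        intro k
        simp only [bl, Set.mem_ofPred_eq]
        rw [hn, zpow_le_zpow_iff_right₀ hp1]
        omega
      have hjm : j < m := by
        rw [hmem] at ht; omega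
      rw [Finset.sum_eq_single j]
      · rw [Set.indicator_of_mem ((hmem j).2 le_rfl), Set.indicator_of_notMem
          (by rw [hmem]; omega), sub_zero, mul_comm, div_eq_mul_inv]
        congr 1
        rw [← Complex.ofReal_inv]
        congr 1
        rw [hn, hA, zpow_neg, zpow_natCast, Real.inv_rpow (by positivity), inv_inv,
          ← Real.rpow_add_one hpos.ne', ← Real.rpow_natCast, ← Real.rpow_natCast,
          ← Real.rpow_mul hpos.le, ← Real.rpow_mul hpos.le, mul_comm]
      · intro k _ hkj
        rcases lt_or_gt_of_ne hkj with h | h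
        · rw [Set.indicator_of_mem ((hmem k).2 h.le), Set.indicator_of_mem ((hmem _).2 h)]
          simp
        · rw [Set.indicator_of_notMem (by rw [hmem]; omega), Set.indicator_of_notMem
            (by rw [hmem]; omega)]
          simp
      · intro h
        exact absurd (Finset.mem_range.2 hjm) h
  have hi : ∀ k, Integrable ((bl p k).indicator g) μ := fun k => hgint.indicator (bl_meas p k)
  have hJ := bl_integral p τ m hm hτ μ hinv hprob
  have hJm : ∫ t, (bl p m).indicator g t ∂μ = 0 := by
    have : ∀ t, (bl p m).indicator g t = 0 := fun t => by
      by_cases ht : t ∈ bl p m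
      · rw [Set.indicator_of_mem ht, hgz t ht]
      · rw [Set.indicator_of_notMem ht]
    simp [this]
  have hI : ∫ t : ℤ_[p], g t / ((‖t‖ ^ (α + 1) : ℝ) : ℂ) ∂μ =
      ∑ k ∈ Finset.range m, (((A * p) ^ k : ℝ) : ℂ) *
        (∫ t, (bl p k).indicator g t ∂μ - ∫ t, (bl p (k + 1)).indicator g t ∂μ) := by
    simp_rw [hpt]
    rw [integral_finsetSum]
    · refine Finset.sum_congr rfl fun k _ => ?_
      rw [integral_const_mul, integral_sub (hi k) (hi (k + 1))]
    · intro k _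
      exact ((hi k).sub (hi (k + 1))).const_mul _
  obtain ⟨M, rfl⟩ : ∃ M, m = M + 1 := ⟨m - 1, by omega⟩
  have hsum : ∫ t : ℤ_[p], g t / ((‖t‖ ^ (α + 1) : ℝ) : ℂ) ∂μ =
      ((-(1 - (p : ℝ)⁻¹) * ∑ k ∈ Finset.range M, A ^ k - A ^ M : ℝ) : ℂ) := by
    have hpc : (p : ℂ) ≠ 0 := by exact_mod_cast (Fact.out : p.Prime).ne_zero
    rw [hI, Finset.sum_range_succ, hJm, hJ M (by omega)]
    push_cast
    rw [Finset.mul_sum, sub_eq_add_neg (Finset.sum _ _)]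
    congr 1
    · refine Finset.sum_congr rfl fun k hk => ?_
      have := Finset.mem_range.1 hk
      rw [hJ k (by omega), hJ (k + 1) (by omega), mul_pow, pow_succ]
      field_simp
      ring
    · rw [mul_pow]
      field_simp
      ring
  rw [hsum, ← Complex.ofReal_mul]
  congr 1
  have hτA : ‖τ‖ ^ α = A ^ (M + 1) := by
    rw [hτ, hA, zpow_natCast, ← Real.rpow_natCast, ← Real.rpow_natCast, ← Real.rpow_mul hpos.le,
      ← Real.rpow_mul hpos.le, mul_comm]
  have hD : (p : ℝ) ^ (-(α + 1)) = (A * p)⁻¹ := by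
    rw [Real.rpow_neg hpos.le, Real.rpow_add_one hpos.ne']
  have hD0 : 1 - (A * p)⁻¹ ≠ 0 := by
    have : (A * p)⁻¹ < 1 := inv_lt_one_of_one_lt₀ (by nlinarith)
    linarith
  have hgeo := mul_neg_geom_sum A M
  have hA0 : A ≠ 0 := by positivity
  unfold vtConst vtShift
  rw [hτA, hD, ← hA, eq_sub_iff_add_eq, div_mul_eq_mul_div, ← add_div, div_eq_iff hD0]
  have : (1 - A) * (-(1 - (p : ℝ)⁻¹) * ∑ k ∈ Finset.range M, A ^ k - A ^ M) =
      -(1 - (p : ℝ)⁻¹) * (1 - A ^ M) - (1 - A) * A ^ M := by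
    rw [← hgeo]; ring
  rw [this]
  field_simp
  ring
end
end
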